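/- arXiv:2002.06981 — 3 statements merged into one kernel-verified Lean document; each statement's English description precedes it below -/
import Mathlib

section
/- Let U, V, W be finite-dimensional inner product spaces over ℂ and let a : U → V, b : V → W be linear maps with b ∘ a = 0. Define Δ_V := a ∘ a† + b† ∘ b. Let λ ∈ ℂ with λ ≠ 0, and let E := ker(Δ_V − λ·id), F := E ∩ ker(b), G := E ∩ ker(a†). Then E is the internal direct sum of F and G, i.e. F ∩ G = {0} and F + G = E. -/
open LinearMap

/-! Since `b ∘ a = 0` and `a† ∘ b† = 0`, the endomorphisms `a ∘ a†` and `b† ∘ b` annihilate each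
other. For such a pair `f`, `g`, every `x` with `(f + g) x = μ x` satisfies `f (f x) = μ (f x)` and
`g (g x) = μ (g x)`, so for invertible `μ` the decomposition `x = μ⁻¹ (f x) + μ⁻¹ (g x)` splits the
eigenspace of `f + g` into those of `f` and `g`. For `f = a ∘ a†` and `g = b† ∘ b` these consist of
the closed and coclosed eigenvectors of `f + g`: if `f x = μ x` then `μ (b x) = b (f x) = 0`, and
likewise for `g` and `a†`. -/

section Eigenspace

open Module.End

variable {R M N : Type*} [CommRing R] [AddCommGroup M] [Module R M] [AddCommGroup N] [Module R N]
  {f g : Module.End R M} {μ : R}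

theorem eigenspace_add_comp_inf_ker {b : M →ₗ[R] N} (c : N →ₗ[R] M) (hbf : b ∘ₗ f = 0)
    (hμ : IsUnit μ) : eigenspace (f + c ∘ₗ b) μ ⊓ ker b = eigenspace f μ := by
  ext x
  simp only [Submodule.mem_inf, mem_eigenspace_iff, mem_ker, LinearMap.add_apply, comp_apply]
  constructor
  · rintro ⟨hx, hbx⟩
    simpa only [hbx, map_zero, add_zero] using hx
  · intro hfx
    have hbx : b x = 0 := by
      rw [← hμ.smul_eq_zero, ← map_smul, ← hfx]
      exact LinearMap.congr_fun hbf x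
    exact ⟨by rw [hbx, map_zero, add_zero, hfx], hbx⟩

theorem disjoint_eigenspace_of_mul_eq_zero (hgf : g * f = 0) (hμ : IsUnit μ) :
    Disjoint (eigenspace f μ) (eigenspace g μ) := by
  refine Submodule.disjoint_def.2 fun x hfx hgx ↦ ?_
  rw [mem_eigenspace_iff] at hfx hgx
  have hμμx : μ • μ • x = 0 := calc
    μ • μ • x = g (f x) := by rw [hfx, map_smul, hgx]
    _ = 0 := LinearMap.congr_fun hgf x
  simpa only [hμ.smul_eq_zero] using hμμx

theorem apply_mem_eigenspace_of_mem_eigenspace_add (hfg : f * g = 0) {x : M}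
    (hx : x ∈ eigenspace (f + g) μ) : f x ∈ eigenspace f μ := by
  rw [mem_eigenspace_iff, LinearMap.add_apply] at hx
  have hfgx : f (g x) = 0 := LinearMap.congr_fun hfg x
  rw [mem_eigenspace_iff, ← map_smul, ← hx, map_add, hfgx, add_zero]

theorem eigenspace_le_eigenspace_add_of_mul_eq_zero (hgf : g * f = 0) (hμ : IsUnit μ) :
    eigenspace f μ ≤ eigenspace (f + g) μ :=
  (eigenspace_add_comp_inf_ker LinearMap.id hgf hμ).ge.trans inf_le_left

theorem eigenspace_sup_eigenspace_of_mul_eq_zero (hfg : f * g = 0) (hgf : g * f = 0)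
    (hμ : IsUnit μ) : eigenspace f μ ⊔ eigenspace g μ = eigenspace (f + g) μ := by
  apply le_antisymm
  · refine sup_le (eigenspace_le_eigenspace_add_of_mul_eq_zero hgf hμ) ?_
    rw [add_comm f g]
    exact eigenspace_le_eigenspace_add_of_mul_eq_zero hfg hμ
  · intro x hx
    have hfx : f x ∈ eigenspace f μ := apply_mem_eigenspace_of_mem_eigenspace_add hfg hx
    have hgx : g x ∈ eigenspace g μ :=
      apply_mem_eigenspace_of_mem_eigenspace_add hgf (add_comm f g ▸ hx)
    have hμx : μ • x ∈ eigenspace f μ ⊔ eigenspace g μ :=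
      mem_eigenspace_iff.1 hx ▸ Submodule.add_mem_sup hfx hgx
    exact (Submodule.smul_mem_iff_of_isUnit _ hμ).1 hμx

end Eigenspace

theorem stmt_14_general
    {R U V W : Type*} [CommRing R] [AddCommGroup U] [Module R U] [AddCommGroup V] [Module R V]
    [AddCommGroup W] [Module R W]
    {a : U →ₗ[R] V} {a' : V →ₗ[R] U} {b : V →ₗ[R] W} {b' : W →ₗ[R] V}
    (hba : b ∘ₗ a = 0) (hab : a' ∘ₗ b' = 0) {μ : R} (hμ : IsUnit μ) {E F G : Submodule R V}
    (hE : E = Module.End.eigenspace (a ∘ₗ a' + b' ∘ₗ b) μ)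
    (hF : F = E ⊓ ker b) (hG : G = E ⊓ ker a') :
    F ⊓ G = ⊥ ∧ F ⊔ G = E := by
  have hbaa' : b ∘ₗ (a ∘ₗ a') = 0 := by rw [← comp_assoc, hba, zero_comp]
  have ha'b'b : a' ∘ₗ (b' ∘ₗ b) = 0 := by rw [← comp_assoc, hab, zero_comp]
  have hF' : F = Module.End.eigenspace (a ∘ₗ a') μ := by
    rw [hF, hE, eigenspace_add_comp_inf_ker b' hbaa' hμ]
  have hG' : G = Module.End.eigenspace (b' ∘ₗ b) μ := by
    rw [hG, hE, add_comm, eigenspace_add_comp_inf_ker a ha'b'b hμ]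
  have hfg : (a ∘ₗ a') * (b' ∘ₗ b) = 0 := by
    rw [Module.End.mul_eq_comp, comp_assoc, ha'b'b, comp_zero]
  have hgf : (b' ∘ₗ b) * (a ∘ₗ a') = 0 := by
    rw [Module.End.mul_eq_comp, comp_assoc, hbaa', comp_zero]
  rw [hF', hG', hE]
  exact ⟨(disjoint_eigenspace_of_mul_eq_zero hgf hμ).eq_bot,
    eigenspace_sup_eigenspace_of_mul_eq_zero hfg hgf hμ⟩

/-- For a two-step complex `a : U → V`, `b : V → W` with `b ∘ a = 0` and Hodge Laplacian
`Δ_V = a a† + b† b`, any nonzero-eigenvalue eigenspace `E = ker (Δ_V - λ id)` is the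
internal direct sum of its subspaces `F = E ∩ ker b` of closed eigenvectors and
`G = E ∩ ker a†` of coclosed eigenvectors. -/
theorem stmt_14
    {U V W : Type*}
    [NormedAddCommGroup U] [InnerProductSpace ℂ U] [FiniteDimensional ℂ U]
    [NormedAddCommGroup V] [InnerProductSpace ℂ V] [FiniteDimensional ℂ V]
    [NormedAddCommGroup W] [InnerProductSpace ℂ W] [FiniteDimensional ℂ W]
    (a : U →ₗ[ℂ] V) (b : V →ₗ[ℂ] W) (hba : b ∘ₗ a = 0)
    (lam : ℂ) (hlam : lam ≠ 0)
    (E F G : Submodule ℂ V)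
    (hE : E = ker (a ∘ₗ adjoint a + adjoint b ∘ₗ b - lam • LinearMap.id))
    (hF : F = E ⊓ ker b) (hG : G = E ⊓ ker (adjoint a)) :
    F ⊓ G = ⊥ ∧ F ⊔ G = E := by
  have hab : adjoint a ∘ₗ adjoint b = 0 := by rw [← adjoint_comp, hba, map_zero]
  exact stmt_14_general hba hab hlam.isUnit (hE.trans Module.End.eigenspace_def.symm) hF hG
end

section
/- Let U, V, W, X be finite-dimensional inner product spaces over ℂ and let a : U → V, b : V → W, c : W → X be linear maps with b ∘ a = 0 and c ∘ b = 0. Define Δ_V := a ∘ a† + b† ∘ b and Δ_W := b ∘ b† + c† ∘ c. Let λ ∈ ℂ with λ ≠ 0, and set G := ker(Δ_V − λ·id) ∩ ker(a†) and F' := ker(Δ_W − λ·id) ∩ ker(c). Then b maps G into F' and the restriction of b to G is a linear bijection from G onto F'. -/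
open LinearMap

/-! Dividing by `λ ≠ 0` shows that the `λ`-eigenvectors of `b† b` lie in the range of `b†`, hence
are coclosed, and that those of `b b†` lie in the range of `b`, hence are closed. Since `Δ_V` is
`b† b` on coclosed vectors and `Δ_W` is `b b†` on closed ones, `G` and `F'` are exactly the
`λ`-eigenspaces of `b† b` and of `b b†`, and between these `b` and `λ⁻¹ b†` are mutually inverse.
-/

open Module.End (eigenspace mem_eigenspace_iff eigenspace_def)

section Eigenspaces

variable {R U V W : Type*} [CommRing R]
  [AddCommGroup U] [Module R U] [AddCommGroup V] [Module R V] [AddCommGroup W] [Module R W]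
  {μ : R}

theorem eigenspace_comp_le_range (hμ : IsUnit μ) (f : V →ₗ[R] W) (g : W →ₗ[R] V) :
    eigenspace (g ∘ₗ f) μ ≤ range g := by
  intro v hv
  have hgf : g (f v) = μ • v := mem_eigenspace_iff.mp hv
  rw [← Submodule.smul_mem_iff_of_isUnit (range g) hμ, ← hgf]
  exact mem_range_self g (f v)

theorem eigenspace_comp_le_ker (hμ : IsUnit μ) (f : V →ₗ[R] W) {g : W →ₗ[R] V} {k : V →ₗ[R] U}
    (hkg : k ∘ₗ g = 0) : eigenspace (g ∘ₗ f) μ ≤ ker k :=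
  (eigenspace_comp_le_range hμ f g).trans (range_le_ker_iff.mpr hkg)

theorem eigenspace_add_comp_inf_ker_s15 (T : Module.End R V) (h : U →ₗ[R] V) (k : V →ₗ[R] U) (μ : R) :
    eigenspace (T + h ∘ₗ k) μ ⊓ ker k = eigenspace T μ ⊓ ker k := by
  ext v
  refine and_congr_left fun hv : k v = 0 => ?_
  have hT : (T + h ∘ₗ k) v = T v := by
    rw [LinearMap.add_apply, comp_apply, hv, map_zero, add_zero]
  rw [SetLike.mem_coe, SetLike.mem_coe, mem_eigenspace_iff, mem_eigenspace_iff, hT]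

theorem mapsTo_eigenspace_comp (f : V →ₗ[R] W) (g : W →ₗ[R] V) (μ : R) :
    Set.MapsTo f (eigenspace (g ∘ₗ f) μ) (eigenspace (f ∘ₗ g) μ) := by
  intro v hv
  have hgf : g (f v) = μ • v := mem_eigenspace_iff.mp hv
  exact mem_eigenspace_iff.mpr (by rw [comp_apply, hgf, map_smul])

theorem bijOn_eigenspace_comp (hμ : IsUnit μ) (f : V →ₗ[R] W) (g : W →ₗ[R] V) :
    Set.BijOn f (eigenspace (g ∘ₗ f) μ) (eigenspace (f ∘ₗ g) μ) := by
  refine ⟨mapsTo_eigenspace_comp f g μ, fun v hv v' hv' hvv' => ?_, fun w hw => ?_⟩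
  · have hgf : g (f v) = μ • v := mem_eigenspace_iff.mp hv
    have hgf' : g (f v') = μ • v' := mem_eigenspace_iff.mp hv'
    exact hμ.smul_left_cancel.mp (by rw [← hgf, ← hgf', hvv'])
  · have hfg : f (g w) = μ • w := mem_eigenspace_iff.mp hw
    obtain ⟨ν, hνμ⟩ := hμ.exists_left_inv
    refine ⟨ν • g w, Submodule.smul_mem _ ν (mapsTo_eigenspace_comp g f μ hw), ?_⟩
    rw [map_smul, hfg, smul_smul, hνμ, one_smul]

theorem stmt_15_general {X : Type*} [AddCommGroup X] [Module R X]
    {a : U →ₗ[R] V} {b : V →ₗ[R] W} {c : W →ₗ[R] X}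
    {a' : V →ₗ[R] U} {b' : W →ₗ[R] V} {c' : X →ₗ[R] W}
    (hab' : a' ∘ₗ b' = 0) (hcb : c ∘ₗ b = 0) (hμ : IsUnit μ) :
    Set.BijOn b (eigenspace (a ∘ₗ a' + b' ∘ₗ b) μ ⊓ ker a' : Submodule R V)
      (eigenspace (b ∘ₗ b' + c' ∘ₗ c) μ ⊓ ker c : Submodule R W) := by
  have hV : eigenspace (a ∘ₗ a' + b' ∘ₗ b) μ ⊓ ker a' = eigenspace (b' ∘ₗ b) μ := by
    rw [add_comm, eigenspace_add_comp_inf_ker_s15, inf_eq_left.mpr (eigenspace_comp_le_ker hμ b hab')]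
  have hW : eigenspace (b ∘ₗ b' + c' ∘ₗ c) μ ⊓ ker c = eigenspace (b ∘ₗ b') μ := by
    rw [eigenspace_add_comp_inf_ker_s15, inf_eq_left.mpr (eigenspace_comp_le_ker hμ b' hcb)]
  rw [hV, hW]
  exact bijOn_eigenspace_comp hμ b b'

end Eigenspaces

/-- For a cochain complex `U → V → W → X` of finite-dimensional complex inner product
spaces with Hodge Laplacians `Δ_V = a a† + b† b` and `Δ_W = b b† + c† c`, and a nonzero
eigenvalue `λ`, the differential `b` maps the space `G` of coclosed `λ`-eigenvectors of
`Δ_V` into the space `F'` of closed `λ`-eigenvectors of `Δ_W`, and restricts to a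
bijection from `G` onto `F'`. -/
theorem stmt_15
    {U V W X : Type*}
    [NormedAddCommGroup U] [InnerProductSpace ℂ U] [FiniteDimensional ℂ U]
    [NormedAddCommGroup V] [InnerProductSpace ℂ V] [FiniteDimensional ℂ V]
    [NormedAddCommGroup W] [InnerProductSpace ℂ W] [FiniteDimensional ℂ W]
    [NormedAddCommGroup X] [InnerProductSpace ℂ X] [FiniteDimensional ℂ X]
    (a : U →ₗ[ℂ] V) (b : V →ₗ[ℂ] W) (c : W →ₗ[ℂ] X)
    (hba : b ∘ₗ a = 0) (hcb : c ∘ₗ b = 0)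
    (lam : ℂ) (hlam : lam ≠ 0)
    (G : Submodule ℂ V) (F' : Submodule ℂ W)
    (hG : G = ker (a ∘ₗ adjoint a + adjoint b ∘ₗ b - lam • LinearMap.id) ⊓
      ker (adjoint a))
    (hF' : F' = ker (b ∘ₗ adjoint b + adjoint c ∘ₗ c - lam • LinearMap.id) ⊓ ker c) :
    Set.MapsTo b G F' ∧ Set.BijOn b G F' := by
  have hab : adjoint a ∘ₗ adjoint b = 0 := by rw [← adjoint_comp, hba, map_zero]
  have hbij : Set.BijOn b G F' := by
    simpa only [hG, hF', eigenspace_def, Module.End.one_eq_id] using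
      stmt_15_general hab hcb hlam.isUnit
  exact ⟨hbij.mapsTo, hbij⟩
end

section
/- Let U, V, W, X be finite-dimensional inner product spaces over ℂ and let a : U → V, b : V → W, c : W → X be linear maps with b ∘ a = 0 and c ∘ b = 0. Define Δ_V := a ∘ a† + b† ∘ b and Δ_W := b ∘ b† + c† ∘ c. Let λ ∈ ℂ with λ ≠ 0. Then dim ker(Δ_V − λ·id) = dim(ker(Δ_V − λ·id) ∩ ker(b)) + dim(ker(Δ_W − λ·id) ∩ ker(c)). -/
open LinearMap

/-!
Since `d² = 0`, the differential intertwines consecutive Hodge Laplacians, so `d` carries the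
`μ`-eigenspace on `V` into the closed `μ`-eigenspace on `W`. On closed vectors the Laplacian is
`dδ`, so for invertible `μ` a closed eigenvector `w` is the differential of `μ⁻¹ δw`, which is again
an eigenvector because `δ² = 0`. Rank–nullity for `d` on the eigenspace gives the formula.
-/

section RankNullity

variable {K V W : Type*} [DivisionRing K] [AddCommGroup V] [Module K V]
  [AddCommGroup W] [Module K W]

theorem finrank_map_add_finrank_inf_ker (f : V →ₗ[K] W) (p : Submodule K V)
    [FiniteDimensional K p] :
    Module.finrank K (p.map f) + Module.finrank K ↥(p ⊓ ker f) = Module.finrank K p := by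
  rw [← range_domRestrict, ← Submodule.map_comap_subtype, Submodule.finrank_map_subtype_eq,
    ← ker_domRestrict, finrank_range_add_finrank_ker]

end RankNullity

section HodgeLaplacian

variable {R U V W X : Type*} [CommRing R]
  [AddCommGroup U] [Module R U] [AddCommGroup V] [Module R V]
  [AddCommGroup W] [Module R W] [AddCommGroup X] [Module R X]

theorem map_eigenspace_le_of_comp_eq {f : Module.End R V} {g : Module.End R W} {h : V →ₗ[R] W}
    (hfg : h ∘ₗ f = g ∘ₗ h) (μ : R) : (f.eigenspace μ).map h ≤ g.eigenspace μ := by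
  rintro _ ⟨v, hv, rfl⟩
  rw [SetLike.mem_coe, Module.End.mem_eigenspace_iff] at hv
  rw [Module.End.mem_eigenspace_iff, ← comp_apply, ← hfg, comp_apply, hv, map_smul]

/-- The Hodge Laplacian `dδ + δd` on the middle term of `U → V → W`. The codifferentials `δ₀`, `δ₁`
are arbitrary linear maps in the direction opposite to `d₀`, `d₁`; for inner product spaces they are
the adjoints. -/
def hodgeLaplacian (d₀ : U →ₗ[R] V) (δ₀ : V →ₗ[R] U) (d₁ : V →ₗ[R] W) (δ₁ : W →ₗ[R] V) :
    Module.End R V :=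
  d₀ ∘ₗ δ₀ + δ₁ ∘ₗ d₁

variable {d₀ : U →ₗ[R] V} {δ₀ : V →ₗ[R] U} {d₁ : V →ₗ[R] W} {δ₁ : W →ₗ[R] V}
  {d₂ : W →ₗ[R] X} {δ₂ : X →ₗ[R] W}

theorem hodgeLaplacian_apply (v : V) :
    hodgeLaplacian d₀ δ₀ d₁ δ₁ v = d₀ (δ₀ v) + δ₁ (d₁ v) :=
  rfl

theorem hodgeLaplacian_apply_of_closed {v : V} (hv : d₁ v = 0) :
    hodgeLaplacian d₀ δ₀ d₁ δ₁ v = d₀ (δ₀ v) := by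
  rw [hodgeLaplacian_apply, hv, map_zero, add_zero]

theorem hodgeLaplacian_apply_of_coclosed {v : V} (hv : δ₀ v = 0) :
    hodgeLaplacian d₀ δ₀ d₁ δ₁ v = δ₁ (d₁ v) := by
  rw [hodgeLaplacian_apply, hv, map_zero, zero_add]

theorem differential_comp_hodgeLaplacian (hd₁₀ : d₁ ∘ₗ d₀ = 0) (hd₂₁ : d₂ ∘ₗ d₁ = 0) :
    d₁ ∘ₗ hodgeLaplacian d₀ δ₀ d₁ δ₁ = hodgeLaplacian d₁ δ₁ d₂ δ₂ ∘ₗ d₁ := by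
  ext v
  have hclosed : d₂ (d₁ v) = 0 := LinearMap.congr_fun hd₂₁ v
  have hexact : d₁ (d₀ (δ₀ v)) = 0 := LinearMap.congr_fun hd₁₀ (δ₀ v)
  rw [comp_apply, comp_apply, hodgeLaplacian_apply_of_closed hclosed, hodgeLaplacian_apply,
    map_add, hexact, zero_add]

theorem codifferential_mem_eigenspace_hodgeLaplacian (hδ : δ₀ ∘ₗ δ₁ = 0) {μ : R} {w : W}
    (hw : w ∈ (hodgeLaplacian d₁ δ₁ d₂ δ₂).eigenspace μ ⊓ ker d₂) :
    δ₁ w ∈ (hodgeLaplacian d₀ δ₀ d₁ δ₁).eigenspace μ := by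
  obtain ⟨heigen, hclosed⟩ := hw
  rw [SetLike.mem_coe, Module.End.mem_eigenspace_iff, hodgeLaplacian_apply_of_closed hclosed]
    at heigen
  have hcoclosed : δ₀ (δ₁ w) = 0 := LinearMap.congr_fun hδ w
  rw [Module.End.mem_eigenspace_iff, hodgeLaplacian_apply_of_coclosed hcoclosed, heigen, map_smul]

theorem map_eigenspace_hodgeLaplacian (hd₁₀ : d₁ ∘ₗ d₀ = 0) (hd₂₁ : d₂ ∘ₗ d₁ = 0)
    (hδ : δ₀ ∘ₗ δ₁ = 0) {μ : R} (hμ : IsUnit μ) :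
    ((hodgeLaplacian d₀ δ₀ d₁ δ₁).eigenspace μ).map d₁ =
      (hodgeLaplacian d₁ δ₁ d₂ δ₂).eigenspace μ ⊓ ker d₂ := by
  apply le_antisymm
  · exact le_inf (map_eigenspace_le_of_comp_eq (differential_comp_hodgeLaplacian hd₁₀ hd₂₁) μ)
      (map_le_range.trans (range_le_ker_iff.mpr hd₂₁))
  · intro w hw
    have hdδ : d₁ (δ₁ w) = μ • w := by
      rw [← hodgeLaplacian_apply_of_closed hw.2, Module.End.mem_eigenspace_iff.mp hw.1]
    rw [← Submodule.smul_mem_iff_of_isUnit _ hμ, ← hdδ]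
    exact Submodule.mem_map_of_mem (codifferential_mem_eigenspace_hodgeLaplacian hδ hw)

end HodgeLaplacian

theorem stmt_16_general {K U V W X : Type*} [Field K]
    [AddCommGroup U] [Module K U] [AddCommGroup V] [Module K V]
    [AddCommGroup W] [Module K W] [AddCommGroup X] [Module K X]
    {d₀ : U →ₗ[K] V} {δ₀ : V →ₗ[K] U} {d₁ : V →ₗ[K] W} {δ₁ : W →ₗ[K] V}
    {d₂ : W →ₗ[K] X} {δ₂ : X →ₗ[K] W}
    (hd₁₀ : d₁ ∘ₗ d₀ = 0) (hd₂₁ : d₂ ∘ₗ d₁ = 0) (hδ : δ₀ ∘ₗ δ₁ = 0) {μ : K} (hμ : μ ≠ 0)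
    [FiniteDimensional K ((hodgeLaplacian d₀ δ₀ d₁ δ₁).eigenspace μ)] :
    Module.finrank K ((hodgeLaplacian d₀ δ₀ d₁ δ₁).eigenspace μ) =
      Module.finrank K ↥((hodgeLaplacian d₀ δ₀ d₁ δ₁).eigenspace μ ⊓ ker d₁) +
        Module.finrank K ↥((hodgeLaplacian d₁ δ₁ d₂ δ₂).eigenspace μ ⊓ ker d₂) := by
  rw [← map_eigenspace_hodgeLaplacian hd₁₀ hd₂₁ hδ hμ.isUnit, add_comm,
    finrank_map_add_finrank_inf_ker]

/-- For a cochain complex `U → V → W → X` of finite-dimensional complex inner product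
spaces with Hodge Laplacians `Δ_V = a a† + b† b` and `Δ_W = b b† + c† c`, the multiplicity
of a nonzero eigenvalue `λ` of `Δ_V` equals the dimension of the closed `λ`-eigenvectors
of `Δ_V` plus the dimension of the closed `λ`-eigenvectors of `Δ_W`. -/
theorem stmt_16
    {U V W X : Type*}
    [NormedAddCommGroup U] [InnerProductSpace ℂ U] [FiniteDimensional ℂ U]
    [NormedAddCommGroup V] [InnerProductSpace ℂ V] [FiniteDimensional ℂ V]
    [NormedAddCommGroup W] [InnerProductSpace ℂ W] [FiniteDimensional ℂ W]
    [NormedAddCommGroup X] [InnerProductSpace ℂ X] [FiniteDimensional ℂ X]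
    (a : U →ₗ[ℂ] V) (b : V →ₗ[ℂ] W) (c : W →ₗ[ℂ] X)
    (hba : b ∘ₗ a = 0) (hcb : c ∘ₗ b = 0)
    (lam : ℂ) (hlam : lam ≠ 0) :
    Module.finrank ℂ
        ↥(ker (a ∘ₗ adjoint a + adjoint b ∘ₗ b - lam • LinearMap.id)) =
      Module.finrank ℂ
          ↥(ker (a ∘ₗ adjoint a + adjoint b ∘ₗ b - lam • LinearMap.id) ⊓ ker b) +
        Module.finrank ℂ
          ↥(ker (b ∘ₗ adjoint b + adjoint c ∘ₗ c - lam • LinearMap.id) ⊓ ker c) := by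
  have hδ : adjoint a ∘ₗ adjoint b = 0 := by rw [← adjoint_comp, hba, map_zero]
  have h := stmt_16_general (δ₂ := adjoint c) hba hcb hδ hlam
  rwa [Module.End.eigenspace_def, Module.End.eigenspace_def] at h
end
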